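/- Separated exact reduction under Assumption (A4): suppose each conditional map factors as M_k = E ∘ K_k with E and K_k linear maps on the n×n complex matrices. Let R : Matrix n n ℂ →ₗ[ℂ] W and J : W →ₗ[ℂ] Matrix n n ℂ with R ∘ J = id_W, set 𝔼 = J ∘ R, and assume: ker 𝔼 ⊆ N; 𝔼 is self-adjoint for the Hilbert–Schmidt inner product (trace((𝔼 A)ᴴ B) = trace(Aᴴ (𝔼 B)) for all A, B); and the Hilbert–Schmidt adjoint E⁺ of E (characterized by trace((E⁺ A)ᴴ B) = trace(Aᴴ (E B)) for all A, B) maps the range of 𝔼 into itself. Define Ǩ_k = R ∘ K_k ∘ J, Ě = R ∘ E ∘ J, and Č = C ∘ J. Then for every matrix ρ and every word w = [k_0, …, k_t] over Ω, C(M_w ρ) = Č( (Ě ∘ Ǩ_{k_t}) ∘ ⋯ ∘ (Ě ∘ Ǩ_{k_0}) (R ρ) ). -/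

import Mathlib

/-!
Write `𝔼 = J ∘ R`. By self-adjointness `ker 𝔼 = ker R` is the orthogonal complement of the range
of `𝔼`, so invariance of the range under `E⁺` means invariance of `ker R` under `E`. Since `J (R X)`
and `X` differ by an element of `ker R`, this gives `R E J R = R E`: the projection inserted between
`E` and `K_k` by the separate reduction is invisible, and `Ě ∘ Ǩ_k` is the joint reduction of `M_k`.
The joint reduction is exact because `ker R` is non-observable: the projection applied before each
step does not change any future output.
-/

open Matrix

/-- Composition of the conditional maps along a word `w = [k₀, …, k_t]`:
`Mword M w = M_{k_t} ∘ ⋯ ∘ M_{k₀}` (the empty word gives the identity). -/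
def Mword {Ω V : Type*} [AddCommMonoid V] [Module ℂ V]
    (M : Ω → V →ₗ[ℂ] V) : List Ω → (V →ₗ[ℂ] V)
  | [] => LinearMap.id
  | k :: w => (Mword M w).comp (M k)

/-- The non-observable subspace `N = {X | C (M_w X) = 0 for every word w}`. -/
def NonObs {Ω : Type*} {n : ℕ} {Y : Type*} [AddCommGroup Y] [Module ℂ Y]
    (M : Ω → Matrix (Fin n) (Fin n) ℂ →ₗ[ℂ] Matrix (Fin n) (Fin n) ℂ)
    (C : Matrix (Fin n) (Fin n) ℂ →ₗ[ℂ] Y) : Set (Matrix (Fin n) (Fin n) ℂ) :=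
  {X | ∀ w : List Ω, C (Mword M w X) = 0}

section Adjoint

open LinearMap Module.End

variable {𝕜 𝕜₁ 𝕜₂ V₁ V₂ F : Type*} [CommSemiring 𝕜] [CommSemiring 𝕜₁] [CommSemiring 𝕜₂]
  [AddCommMonoid V₁] [Module 𝕜₁ V₁] [AddCommMonoid V₂] [Module 𝕜₂ V₂]
  [AddCommMonoid F] [Module 𝕜 F] {σ₁ : 𝕜₁ →+* 𝕜} {σ₂ : 𝕜₂ →+* 𝕜}

lemma ker_mem_invtSubmodule_of_range_adjoint_mem {B : V₁ →ₛₗ[σ₁] V₂ →ₛₗ[σ₂] F}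
    (hB : B.SeparatingRight) {p f : Module.End 𝕜₂ V₂} {p' f' : Module.End 𝕜₁ V₁}
    (hp : ∀ x y, B (p' x) y = B x (p y)) (hf : ∀ x y, B (f' x) y = B x (f y))
    (hrange : range p' ∈ invtSubmodule f') : ker p ∈ invtSubmodule f := by
  intro y (hy : p y = 0)
  refine hB _ fun x => ?_
  obtain ⟨z, hz⟩ : f' (p' x) ∈ range p' := hrange (mem_range_self p' x)
  calc B x (p (f y)) = B (f' (p' x)) y := by rw [← hp, hf]
    _ = B z (p y) := by rw [← hz, hp]
    _ = 0 := by rw [hy, map_zero]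

end Adjoint

section HilbertSchmidt

variable (m n 𝕜 : Type*) [Fintype m] [Fintype n] [CommSemiring 𝕜] [StarRing 𝕜]

/-- The Hilbert–Schmidt form `⟨A, B⟩ = tr (Aᴴ B)`, conjugate-linear in its first argument. -/
def hilbertSchmidtForm : Matrix m n 𝕜 →ₗ⋆[𝕜] Matrix m n 𝕜 →ₗ[𝕜] 𝕜 :=
  LinearMap.mk₂'ₛₗ (starRingEnd 𝕜) (RingHom.id 𝕜) (fun A B => trace (Aᴴ * B))
    (fun A A' B => by rw [conjTranspose_add, Matrix.add_mul, trace_add])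
    (fun c A B => by rw [conjTranspose_smul, Matrix.smul_mul, trace_smul, starRingEnd_apply])
    (fun A B B' => by rw [Matrix.mul_add, trace_add])
    (fun c A B => by rw [Matrix.mul_smul, trace_smul, RingHom.id_apply])

lemma hilbertSchmidtForm_separatingRight : (hilbertSchmidtForm m n 𝕜).SeparatingRight := by
  intro B hB
  refine ext_iff_trace_mul_left.mpr fun A => ?_
  calc trace (A * B) = hilbertSchmidtForm m n 𝕜 Aᴴ B := by
        rw [hilbertSchmidtForm, LinearMap.mk₂'ₛₗ_apply, conjTranspose_conjTranspose]
    _ = trace (A * (0 : Matrix m n 𝕜)) := by rw [hB, Matrix.mul_zero, trace_zero]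

end HilbertSchmidt

section Compress

open LinearMap Module.End

variable {𝕜 V W : Type*} [Ring 𝕜] [AddCommGroup V] [Module 𝕜 V] [AddCommGroup W] [Module 𝕜 W]

/-- The reduction `Ť = R ∘ T ∘ J` of a map `T` on the full space `V` to the reduced space `W`. -/
def compress (R : V →ₗ[𝕜] W) (J : W →ₗ[𝕜] V) (T : Module.End 𝕜 V) : Module.End 𝕜 W :=
  R ∘ₗ T ∘ₗ J

lemma compress_comp_compress {R : V →ₗ[𝕜] W} {J : W →ₗ[𝕜] V} (hRJ : R ∘ₗ J = LinearMap.id)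
    {S : Module.End 𝕜 V} (hS : ker R ∈ invtSubmodule S) (T : Module.End 𝕜 V) :
    compress R J S ∘ₗ compress R J T = compress R J (S ∘ₗ T) := by
  have hRS (x : V) : R (S (J (R x))) = R (S x) := by
    have hx : J (R x) - x ∈ ker R := sub_mem_ker_iff.mpr (LinearMap.congr_fun hRJ (R x))
    rw [← sub_mem_ker_iff, ← map_sub]
    exact hS hx
  ext y
  exact hRS (T (J y))

end Compress

section Observability

open LinearMap Module.End

variable {Ω V W Y : Type*} [AddCommGroup V] [Module ℂ V] [AddCommGroup W] [Module ℂ W]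
  [AddCommGroup Y] [Module ℂ Y]

/-- The non-observable subspace of a conditional evolution on an arbitrary complex vector space;
on matrices its elements are those of `NonObs`. -/
def nonObservable (M : Ω → Module.End ℂ V) (C : V →ₗ[ℂ] Y) : Submodule ℂ V :=
  ⨅ w : List Ω, ker (C ∘ₗ Mword M w)

lemma mem_nonObservable {M : Ω → Module.End ℂ V} {C : V →ₗ[ℂ] Y} {x : V} :
    x ∈ nonObservable M C ↔ ∀ w, C (Mword M w x) = 0 := by
  simp only [nonObservable, Submodule.mem_iInf, mem_ker, LinearMap.comp_apply]

lemma output_eq_of_sub_mem_nonObservable {M : Ω → Module.End ℂ V} {C : V →ₗ[ℂ] Y} {x y : V}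
    (h : x - y ∈ nonObservable M C) (w : List Ω) : C (Mword M w x) = C (Mword M w y) := by
  rw [← sub_eq_zero, ← map_sub, ← map_sub]
  exact mem_nonObservable.mp h w

lemma output_eq_output_compress {M : Ω → Module.End ℂ V} {C : V →ₗ[ℂ] Y}
    {R : V →ₗ[ℂ] W} {J : W →ₗ[ℂ] V} (hRJ : R ∘ₗ J = LinearMap.id)
    (hker : ker R ≤ nonObservable M C) (x : V) (w : List Ω) :
    C (Mword M w x) = C (J (Mword (fun k => compress R J (M k)) w (R x))) := by
  have hproj (x : V) (w : List Ω) : C (Mword M w x) = C (Mword M w (J (R x))) :=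
    output_eq_of_sub_mem_nonObservable
      (hker (sub_mem_ker_iff.mpr (LinearMap.congr_fun hRJ (R x)).symm)) w
  induction w generalizing x with
  | nil => exact hproj x []
  | cons k w ih =>
    calc C (Mword M (k :: w) x) = C (Mword M w (M k (J (R x)))) := hproj x (k :: w)
      _ = C (J (Mword (fun k => compress R J (M k)) w (R (M k (J (R x)))))) := ih _

theorem separated_reduction_A4_general {B : V →ₗ⋆[ℂ] V →ₗ[ℂ] ℂ} (hB : B.SeparatingRight)
    {M K : Ω → Module.End ℂ V} {E Eadj : Module.End ℂ V} {C : V →ₗ[ℂ] Y}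
    (hfac : ∀ k, M k = E ∘ₗ K k) {R : V →ₗ[ℂ] W} {J : W →ₗ[ℂ] V}
    (hRJ : R ∘ₗ J = LinearMap.id) (hker : ker (J ∘ₗ R) ≤ nonObservable M C)
    (hsa : ∀ x y, B (J (R x)) y = B x (J (R y))) (hadj : ∀ x y, B (Eadj x) y = B x (E y))
    (hrange : range (J ∘ₗ R) ∈ invtSubmodule Eadj) (x : V) (w : List Ω) :
    C (Mword M w x) =
      C (J (Mword (fun k => compress R J E ∘ₗ compress R J (K k)) w (R x))) := by
  have hkerJR : ker (J ∘ₗ R) = ker R := ker_comp_of_ker_eq_bot R (ker_eq_bot_of_inverse hRJ)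
  have hE : ker (J ∘ₗ R) ∈ invtSubmodule E :=
    ker_mem_invtSubmodule_of_range_adjoint_mem hB hsa hadj hrange
  rw [hkerJR] at hE hker
  simp only [compress_comp_compress hRJ hE, ← hfac]
  exact output_eq_output_compress hRJ hker x w

end Observability

/-- Separated exact reduction under Assumption (A4): if `M_k = E ∘ K_k`, `R ∘ J = id`,
`ker (J ∘ R) ⊆ N`, `𝔼 = J ∘ R` is self-adjoint for the Hilbert–Schmidt inner product,
and the Hilbert–Schmidt adjoint `E⁺` of `E` maps the range of `𝔼` into itself, then the
reduced model with separately reduced dynamics `Ě = R ∘ E ∘ J` and conditioning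
`Ǩ_k = R ∘ K_k ∘ J` reproduces the conditioned output. -/
theorem separated_reduction_A4 {Ω : Type*} [Fintype Ω] {n : ℕ} (hn : 1 ≤ n)
    {Y : Type*} [AddCommGroup Y] [Module ℂ Y] [FiniteDimensional ℂ Y]
    {W : Type*} [AddCommGroup W] [Module ℂ W] [FiniteDimensional ℂ W]
    (M K : Ω → Matrix (Fin n) (Fin n) ℂ →ₗ[ℂ] Matrix (Fin n) (Fin n) ℂ)
    (E : Matrix (Fin n) (Fin n) ℂ →ₗ[ℂ] Matrix (Fin n) (Fin n) ℂ)
    (C : Matrix (Fin n) (Fin n) ℂ →ₗ[ℂ] Y)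
    (hfac : ∀ k, M k = E.comp (K k))
    (R : Matrix (Fin n) (Fin n) ℂ →ₗ[ℂ] W) (J : W →ₗ[ℂ] Matrix (Fin n) (Fin n) ℂ)
    (hRJ : R.comp J = LinearMap.id)
    (hker : ∀ X, J (R X) = 0 → X ∈ NonObs M C)
    (hsa : ∀ A B : Matrix (Fin n) (Fin n) ℂ,
      Matrix.trace ((J (R A))ᴴ * B) = Matrix.trace (Aᴴ * J (R B)))
    (Eadj : Matrix (Fin n) (Fin n) ℂ →ₗ[ℂ] Matrix (Fin n) (Fin n) ℂ)
    (hadj : ∀ A B : Matrix (Fin n) (Fin n) ℂ,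
      Matrix.trace ((Eadj A)ᴴ * B) = Matrix.trace (Aᴴ * E B))
    (hrange : ∀ X : Matrix (Fin n) (Fin n) ℂ,
      J (R X) = X → J (R (Eadj X)) = Eadj X) :
    ∀ (ρ : Matrix (Fin n) (Fin n) ℂ) (w : List Ω),
      C (Mword M w ρ) =
        C (J (Mword
          (fun k => (R.comp (E.comp J)).comp (R.comp ((K k).comp J))) w (R ρ))) :=
  separated_reduction_A4_general (hilbertSchmidtForm_separatingRight _ _ ℂ) hfac hRJ
    (fun X hX => mem_nonObservable.mpr (hker X hX)) hsa hadj
    (by rintro _ ⟨X, rfl⟩; exact ⟨_, hrange _ (congrArg J (LinearMap.congr_fun hRJ (R X)))⟩)
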